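/- arXiv:2310.13443 — 2 statements merged into one kernel-verified Lean document; each statement's English description precedes it below -/
import Mathlib

section
/- (Formal Puiseux theorem) Let $\k$ be an algebraically closed field of characteristic different from a prime $p$, and $K = \k((z))$. Inside a fixed algebraic closure of $K$, there is exactly one field extension of $K$ of degree $p$; it is Galois with cyclic Galois group and is generated by a $p$-th root of any element of $K^*$ which is not a $p$-th power. -/
/-!
Let `A` be a complete discrete valuation ring with algebraically closed residue field, `K` its
fraction field and `n` a unit of `A`. Let `E / K` have degree `n` and let `B` be the integral
closure of `A` in `E`. By Weierstrass preparation, a monic irreducible polynomial over `A` becomes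
distinguished after translating one of its roots modulo the maximal ideal to `0`, and power series
over `A` can be evaluated at the roots of a distinguished polynomial. So every `b ∈ B` is the
image of a power series under an `A`-algebra homomorphism `A⟦X⟧ → B`, and `B` inherits from `A⟦X⟧`
that it is local and that its units are `n`-th powers. Therefore `B` is a discrete valuation ring,
totally ramified over `A` because the residue field cannot grow, and a uniformizer `ϖ` of `A`
equals `u * π ^ n` with `u` a unit of `B`. As `u` is an `n`-th power, `E` contains an `n`-th root
of `ϖ`, and hence is the splitting field of the Eisenstein polynomial `X ^ n - ϖ`. Conversely
`X ^ n - ϖ` defines an extension of degree `n`. Since units of `A` are `n`-th powers, any `t ≠ 0`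
in `K` is `ϖ ^ m` times an `n`-th power; if `t` is not a `q`-th power for any prime `q ∣ n`, then
`m` is prime to `n`, and by Bézout an `n`-th root of `t` generates an `n`-th root of `ϖ`.
-/

open Polynomial IsLocalRing
open scoped PowerSeries IntermediateField

namespace FormalPuiseux

section Weierstrass

variable {A : Type*} [CommRing A]

lemma irreducible_comp_X_add_C {F : A[X]} (hF : Irreducible F) (a : A) :
    Irreducible (F.comp (X + C a)) :=
  (MulEquiv.irreducible_iff (algEquivAevalXAddC a)).mpr hF

lemma dvd_of_coe_dvd_coe {I : Ideal A} [IsAdicComplete I A] {d F : A[X]}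
    (hd : d.IsDistinguishedAt I) (h : (d : A⟦X⟧) ∣ F) : d ∣ F := by
  rw [← Ideal.Quotient.eq_zero_iff_dvd] at h ⊢
  apply hd.algEquivQuotient.injective
  rw [map_zero, ← h]
  exact hd.algEquivQuotient_apply _

lemma exists_powerSeries_algHom_X_eq {I : Ideal A} [IsAdicComplete I A] {F : A[X]}
    (hF : F.IsDistinguishedAt I) {B : Type*} [CommRing B] [Algebra A B] {b : B}
    (hb : aeval b F = 0) : ∃ φ : A⟦X⟧ →ₐ[A] B, φ PowerSeries.X = b := by
  let eval : A[X] ⧸ Ideal.span {F} →ₐ[A] B :=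
    Ideal.Quotient.liftₐ _ (aeval b) fun G hG ↦ by
      obtain ⟨H, rfl⟩ := Ideal.mem_span_singleton.mp hG
      rw [map_mul, hb, zero_mul]
  refine ⟨(eval.comp hF.algEquivQuotient.symm.toAlgHom).comp (Ideal.Quotient.mkₐ A _), ?_⟩
  have hX : hF.algEquivQuotient (Ideal.Quotient.mk _ X) = Ideal.Quotient.mk _ PowerSeries.X := by
    simp [Polynomial.IsDistinguishedAt.algEquivQuotient]
  change eval (hF.algEquivQuotient.symm (Ideal.Quotient.mk _ PowerSeries.X)) = b
  rw [← hX, AlgEquiv.symm_apply_apply]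
  exact aeval_X b

variable [IsLocalRing A] [IsAdicComplete (maximalIdeal A) A]

lemma isDistinguishedAt_of_irreducible {F : A[X]} (hm : F.Monic) (hF : Irreducible F)
    (h0 : F.coeff 0 ∈ maximalIdeal A) : F.IsDistinguishedAt (maximalIdeal A) := by
  have hne : (F : A⟦X⟧).map (residue A) ≠ 0 := fun h ↦ by
    simpa [hm.coeff_natDegree] using congr(PowerSeries.coeff F.natDegree $h)
  obtain ⟨d, u, H⟩ := PowerSeries.exists_isWeierstrassFactorization hne
  have hdF : d ∣ F := dvd_of_coe_dvd_coe H.isDistinguishedAt ⟨u, H.eq_mul⟩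
  have hdu : ¬IsUnit d := fun hd ↦ by
    have hFu : IsUnit (F : A⟦X⟧) := by
      rw [H.eq_mul]
      exact (hd.map (coeToPowerSeries.ringHom (R := A))).mul H.isUnit
    rw [PowerSeries.isUnit_iff_constantCoeff] at hFu
    exact (mem_maximalIdeal _).mp h0 (by simpa using hFu)
  have := eq_of_monic_of_associated H.isDistinguishedAt.monic hm
    ((hF.dvd_iff.mp hdF).resolve_left hdu).symm
  exact this ▸ H.isDistinguishedAt

variable [IsAlgClosed (ResidueField A)]

lemma exists_powerSeries_algHom_X_add_C_eq {F : A[X]} (hm : F.Monic) (hF : Irreducible F)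
    {B : Type*} [CommRing B] [Algebra A B] {b : B} (hb : aeval b F = 0) :
    ∃ (φ : A⟦X⟧ →ₐ[A] B) (a : A), φ (PowerSeries.X + PowerSeries.C a) = b := by
  obtain ⟨r, hr⟩ := IsAlgClosed.exists_root (F.map (residue A))
    (by rw [hm.degree_map]; exact (hm.degree_pos_of_not_isUnit hF.1).ne')
  obtain ⟨a, rfl⟩ := residue_surjective r
  have hmem : (F.comp (X + C a)).coeff 0 ∈ maximalIdeal A := by
    rw [← residue_eq_zero_iff, coeff_zero_eq_eval_zero, eval_comp]
    simpa [← eval₂_eq_eval_map, eval₂_at_apply] using hr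
  obtain ⟨φ, hφ⟩ := exists_powerSeries_algHom_X_eq (isDistinguishedAt_of_irreducible
    (hm.comp_X_add_C a) (irreducible_comp_X_add_C hF a) hmem) (b := b - algebraMap A B a)
    (by simpa [aeval_comp] using hb)
  refine ⟨φ, a, ?_⟩
  rw [map_add, hφ, PowerSeries.C_eq_algebraMap, AlgHom.commutes, sub_add_cancel]

end Weierstrass

section Hensel

lemma ne_zero_of_isUnit_natCast {R : Type*} [Semiring R] [Nontrivial R] {n : ℕ}
    (hn : IsUnit (n : R)) : n ≠ 0 := by
  rintro rfl
  simp at hn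

lemma exists_pow_eq_and_sub_mem {R : Type*} [CommRing R] {I : Ideal R} [HenselianRing R I] {n : ℕ}
    (hn : IsUnit (n : R)) {c u : R} (hc : IsUnit c) (hcu : c ^ n - u ∈ I) :
    ∃ v, v ^ n = u ∧ v - c ∈ I := by
  rcases eq_or_ne n 0 with rfl | hn0
  · have := subsingleton_of_zero_eq_one (isUnit_zero_iff.mp (by simpa using hn))
    exact ⟨c, Subsingleton.elim _ _, by simp⟩
  obtain ⟨v, hv, hvc⟩ := HenselianRing.is_henselian (I := I) (X ^ n - C u)
    (monic_X_pow_sub_C u hn0) c (by simpa using hcu)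
    (by simpa [derivative_X_pow] using (hn.mul (hc.pow (n - 1))).map (Ideal.Quotient.mk I))
  exact ⟨v, by simpa [IsRoot, sub_eq_zero] using hv, hvc⟩

variable {A : Type*} [CommRing A] [IsLocalRing A] [IsAdicComplete (maximalIdeal A) A]
  [IsAlgClosed (ResidueField A)] {n : ℕ}

lemma exists_pow_eq_of_isUnit (hn : IsUnit (n : A)) {u : A} (hu : IsUnit u) :
    ∃ v, v ^ n = u := by
  have hn0 := ne_zero_of_isUnit_natCast hn
  obtain ⟨r, hr⟩ := IsAlgClosed.exists_pow_nat_eq (residue A u) hn0.bot_lt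
  obtain ⟨c, rfl⟩ := residue_surjective r
  have hc : IsUnit c := isUnit_of_map_unit (residue A) c
    ((isUnit_pow_iff hn0).mp (hr ▸ hu.map (residue A)))
  obtain ⟨v, hv, -⟩ := exists_pow_eq_and_sub_mem (I := maximalIdeal A) hn hc (u := u)
    (by rw [← residue_eq_zero_iff, map_sub, map_pow, hr, sub_self])
  exact ⟨v, hv⟩

lemma exists_powerSeries_pow_eq_of_isUnit (hn : IsUnit (n : A)) {f : A⟦X⟧} (hf : IsUnit f) :
    ∃ g, g ^ n = f := by
  obtain ⟨c, hc⟩ := exists_pow_eq_of_isUnit hn (PowerSeries.isUnit_constantCoeff f hf)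
  have hn0 := ne_zero_of_isUnit_natCast hn
  have hcu : IsUnit c := (isUnit_pow_iff hn0).mp (hc ▸ PowerSeries.isUnit_constantCoeff f hf)
  obtain ⟨g, hg, -⟩ := exists_pow_eq_and_sub_mem (I := Ideal.span {(PowerSeries.X : A⟦X⟧)})
    (by simpa using hn.map PowerSeries.C) (hcu.map PowerSeries.C) (u := f)
    (by rw [Ideal.mem_span_singleton, PowerSeries.X_dvd_iff]; simp [hc])
  exact ⟨g, hg⟩

lemma exists_isPrimitiveRoot (hn : IsUnit (n : A)) : ∃ ζ : A, IsPrimitiveRoot ζ n := by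
  have : NeZero (n : ResidueField A) := ⟨by simpa using (hn.map (residue A)).ne_zero⟩
  obtain ⟨r, hr⟩ := HasEnoughRootsOfUnity.exists_primitiveRoot (ResidueField A) n
  obtain ⟨c, rfl⟩ := residue_surjective r
  have hn0 := ne_zero_of_isUnit_natCast hn
  obtain ⟨ζ, hζ, hζc⟩ := exists_pow_eq_and_sub_mem (I := maximalIdeal A) hn
    (isUnit_of_map_unit (residue A) c (hr.isUnit hn0)) (u := 1)
    (by rw [← residue_eq_zero_iff, map_sub, map_pow, hr.pow_eq_one, map_one, sub_self])
  rw [← residue_eq_zero_iff, map_sub, sub_eq_zero] at hζc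
  refine ⟨ζ, hζ, fun l hl ↦ hr.dvd_of_pow_eq_one l ?_⟩
  rw [← hζc, ← map_pow, hl, map_one]

end Hensel

section Integral

lemma isLocalHom_of_isIntegral {R S : Type*} [CommRing R] [IsLocalRing R] [CommRing S]
    [Nontrivial S] {f : R →+* S} (hf : f.IsIntegral) : IsLocalHom f := by
  constructor
  intro r hr
  have := hf.kerLift.isLocalHom (RingHom.kerLift_injective f)
  have hr' : IsUnit (Ideal.Quotient.mk (RingHom.ker f) r) :=
    isUnit_of_map_unit f.kerLift _ hr
  have : Nontrivial (R ⧸ RingHom.ker f) :=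
    Ideal.Quotient.nontrivial_iff.mpr (RingHom.ker_ne_top f)
  have := IsLocalHom.of_surjective (Ideal.Quotient.mk (RingHom.ker f)) Ideal.Quotient.mk_surjective
  exact isUnit_of_map_unit _ _ hr'

variable {A B : Type*} [CommRing A] [IsLocalRing A] [IsDomain A]
  [IsAdicComplete (maximalIdeal A) A] [IsAlgClosed (ResidueField A)] [CommRing B] [IsDomain B]
  [Algebra A B] [Algebra.IsIntegral A B]

lemma exists_powerSeries_algHom_eq (b : B) :
    ∃ (φ : A⟦X⟧ →ₐ[A] B) (f : A⟦X⟧), φ f = b := by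
  have hb := Algebra.IsIntegral.isIntegral (R := A) b
  obtain ⟨φ, a, h⟩ := exists_powerSeries_algHom_X_add_C_eq (minpoly.monic hb)
    (minpoly.irreducible hb) (minpoly.aeval A b)
  exact ⟨φ, _, h⟩

lemma isLocalRing_of_isIntegral (A B : Type*) [CommRing A] [IsLocalRing A] [IsDomain A]
    [IsAdicComplete (maximalIdeal A) A] [IsAlgClosed (ResidueField A)] [CommRing B] [IsDomain B]
    [Algebra A B] [Algebra.IsIntegral A B] : IsLocalRing B :=
  .of_isUnit_or_isUnit_one_sub_self fun b ↦ by
    obtain ⟨φ, f, rfl⟩ := exists_powerSeries_algHom_eq (A := A) b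
    rw [← map_one φ, ← map_sub]
    exact (isUnit_or_isUnit_one_sub_self f).imp (·.map φ) (·.map φ)

lemma exists_pow_eq_of_isUnit_of_isIntegral {n : ℕ} (hn : IsUnit (n : A)) {b : B} (hb : IsUnit b) :
    ∃ c, c ^ n = b := by
  obtain ⟨φ, f, rfl⟩ := exists_powerSeries_algHom_eq (A := A) b
  have hφ : φ.toRingHom.IsIntegral := by
    refine RingHom.IsIntegral.tower_top (algebraMap A A⟦X⟧) φ.toRingHom ?_
    rw [AlgHom.toRingHom_eq_coe, φ.comp_algebraMap]
    exact Algebra.IsIntegral.isIntegral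
  have := isLocalHom_of_isIntegral hφ
  obtain ⟨g, rfl⟩ := exists_powerSeries_pow_eq_of_isUnit hn (isUnit_of_map_unit φ.toRingHom f hb)
  exact ⟨φ g, (map_pow φ g n).symm⟩

end Integral

section Ramification

variable {A B : Type*} [CommRing A] [IsLocalRing A] [IsAlgClosed (ResidueField A)]
  [CommRing B] [IsLocalRing B] [Algebra A B]

lemma inertiaDeg_maximalIdeal_eq_one [Algebra.IsIntegral A B]
    [(maximalIdeal B).LiesOver (maximalIdeal A)] : (maximalIdeal B).inertiaDeg A = 1 := by
  rw [Ideal.inertiaDeg_eq_of_isMaximal (maximalIdeal A)]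
  let _ := Ideal.Quotient.field (maximalIdeal A)
  let _ := Ideal.Quotient.field (maximalIdeal B)
  have : IsAlgClosed (A ⧸ maximalIdeal A) := inferInstanceAs (IsAlgClosed (ResidueField A))
  have hbij := IsAlgClosed.algebraMap_bijective_of_isIntegral
    (k := A ⧸ maximalIdeal A) (K := B ⧸ maximalIdeal B)
  rw [← (LinearEquiv.ofBijective (Algebra.linearMap _ _) hbij).finrank_eq, Module.finrank_self]

lemma ramificationIdx_maximalIdeal_eq_finrank [IsDomain A] [Module.Finite A B] [Module.Flat A B]
    [(maximalIdeal B).LiesOver (maximalIdeal A)] :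
    (maximalIdeal B).ramificationIdx A = Module.finrank A B := by
  have huniq : ∀ q : (maximalIdeal A).primesOver B, q.1 = maximalIdeal B := fun q ↦ by
    have := q.2.1
    have := q.2.2
    have := Ideal.isMaximal_of_isIntegral_of_isMaximal_comap (R := A) q.1
      (by rw [← Ideal.under_def, ← Ideal.over_def q.1 (maximalIdeal A)]; infer_instance)
    exact eq_maximalIdeal this
  let : Unique ((maximalIdeal A).primesOver B) :=
    { default := ⟨maximalIdeal B, inferInstance, inferInstance⟩
      uniq q := Subtype.ext (huniq q) }
  have h := Ideal.sum_ramification_inertia_eq_finrank (maximalIdeal A) B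
  rw [Fintype.sum_unique] at h
  rw [← h]
  change _ = (maximalIdeal B).ramificationIdx A * (maximalIdeal B).inertiaDeg A
  rw [inertiaDeg_maximalIdeal_eq_one, mul_one]

end Ramification

section DVR

variable {A B : Type*} [CommRing A] [IsDomain A] [IsDiscreteValuationRing A]
  [IsAlgClosed (ResidueField A)] [CommRing B] [IsDomain B] [IsDiscreteValuationRing B]
  [Algebra A B] [Module.Finite A B] [Module.IsTorsionFree A B]

lemma associated_pow_finrank {ϖ : A} {π : B} (hϖ : Irreducible ϖ) (hπ : Irreducible π) :
    Associated (π ^ Module.finrank A B) (algebraMap A B ϖ) := by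
  have hϖ0 : algebraMap A B ϖ ≠ 0 := by simpa using hϖ.ne_zero
  have hmap : (maximalIdeal A).map (algebraMap A B) = Ideal.span {algebraMap A B ϖ} := by
    rw [hϖ.maximalIdeal_eq, Ideal.map_span, Set.image_singleton]
  obtain ⟨e, he⟩ := IsDiscreteValuationRing.associated_pow_irreducible hϖ0 hπ
  have hspan : (maximalIdeal A).map (algebraMap A B) = maximalIdeal B ^ e := by
    rw [hmap, hπ.maximalIdeal_eq, Ideal.span_singleton_pow, Ideal.span_singleton_eq_span_singleton]
    exact he
  have hram := ramificationIdx_maximalIdeal_eq_finrank (A := A) (B := B)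
  rw [Ideal.IsDedekindDomain.ramificationIdx_eq_multiplicity (maximalIdeal A) _
      (by simpa [hmap] using hϖ0), hspan,
    multiplicity_pow_self_of_prime (Ideal.prime_of_isPrime
      (IsDiscreteValuationRing.not_a_field B) inferInstance)] at hram
  exact hram ▸ he.symm

end DVR

section PureExtension

variable {K L : Type*} [Field K] [Field L] [Algebra K L] {n : ℕ} {a : K} {β : L}

lemma isIntegral_of_pow_eq (hn : n ≠ 0) (hβ : β ^ n = algebraMap K L a) : IsIntegral K β :=
  .of_pow hn.bot_lt (hβ ▸ isIntegral_algebraMap)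

lemma finrank_adjoin_le_of_pow_eq (hn : n ≠ 0) (hβ : β ^ n = algebraMap K L a) :
    Module.finrank K K⟮β⟯ ≤ n := by
  rw [IntermediateField.adjoin.finrank (isIntegral_of_pow_eq hn hβ),
    ← natDegree_X_pow_sub_C (n := n) (r := a)]
  exact natDegree_le_of_dvd (minpoly.dvd K β (by simp [hβ])) (X_pow_sub_C_ne_zero hn.bot_lt a)

lemma finrank_adjoin_of_irreducible (h : Irreducible (X ^ n - C a))
    (hβ : β ^ n = algebraMap K L a) : Module.finrank K K⟮β⟯ = n := by
  have hn := ne_zero_of_irreducible_X_pow_sub_C h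
  rw [IntermediateField.adjoin.finrank (isIntegral_of_pow_eq hn hβ),
    ← minpoly.eq_of_irreducible_of_monic h (by simp [hβ]) (monic_X_pow_sub_C a hn),
    natDegree_X_pow_sub_C]

lemma isCoprime_of_forall_prime_pow_ne {m : ℤ} {s : K}
    (h : ∀ q : ℕ, q.Prime → q ∣ n → ∀ r : K, r ^ q ≠ a ^ m * s ^ n) : IsCoprime m n := by
  rw [Int.isCoprime_iff_gcd_eq_one]
  by_contra hgcd
  obtain ⟨q, hq, hqdvd⟩ := Nat.exists_prime_and_dvd hgcd
  obtain ⟨m', rfl⟩ := (Int.natCast_dvd_natCast.mpr hqdvd).trans (Int.gcd_dvd_left m n)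
  obtain ⟨n', rfl⟩ := Int.natCast_dvd_natCast.mp
    ((Int.natCast_dvd_natCast.mpr hqdvd).trans (Int.gcd_dvd_right _ n))
  refine h q hq (dvd_mul_right q n') (a ^ m' * s ^ n') ?_
  rw [mul_pow, ← zpow_natCast, ← zpow_mul, mul_comm m', ← pow_mul, mul_comm n']

lemma exists_mem_adjoin_pow_eq_of_isCoprime {m : ℤ} (hmn : IsCoprime m n) {s : K} (ha : a ≠ 0)
    (hs : s ≠ 0) (hβ : β ^ n = algebraMap K L (a ^ m * s ^ n)) :
    ∃ δ ∈ K⟮β⟯, δ ^ n = algebraMap K L a := by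
  obtain ⟨i, j, hij⟩ := hmn
  have hquot : (β / algebraMap K L s) ^ n = algebraMap K L a ^ m := by
    rw [div_pow, hβ, map_mul, map_zpow₀, map_pow, mul_div_cancel_right₀]
    simpa using pow_ne_zero n hs
  refine ⟨(β / algebraMap K L s) ^ i * algebraMap K L a ^ j, ?_, ?_⟩
  · exact mul_mem (zpow_mem (div_mem (IntermediateField.mem_adjoin_simple_self K β)
      (algebraMap_mem _ s)) i) (zpow_mem (algebraMap_mem _ a) j)
  · rw [mul_pow, ← zpow_natCast, ← zpow_natCast, zpow_comm, zpow_natCast, hquot, ← zpow_mul,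
      ← zpow_mul, ← zpow_add₀ (by simpa using ha), mul_comm m, hij, zpow_one]

lemma irreducible_X_pow_sub_C_of_prime {A : Type*} (K : Type*) [CommRing A] [IsDomain A]
    [IsIntegrallyClosed A] [Field K] [Algebra A K] [IsFractionRing A K] {ϖ : A} (hϖ : Prime ϖ)
    {n : ℕ} (hn : n ≠ 0) : Irreducible (X ^ n - C (algebraMap A K ϖ)) := by
  have hm : (X ^ n - C ϖ).Monic := monic_X_pow_sub_C ϖ hn
  have hlow (i : ℕ) (hi : i ≠ n) : (X ^ n - C ϖ).coeff i = -(C ϖ).coeff i := by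
    rw [coeff_sub, coeff_X_pow, if_neg hi, zero_sub]
  have hE : (X ^ n - C ϖ).IsEisensteinAt (Ideal.span {ϖ}) := by
    refine hm.isEisensteinAt_of_mem_of_notMem
      (by simpa [Ideal.span_singleton_eq_top] using hϖ.not_isUnit) (fun {i} hi ↦ ?_) ?_
    · rw [natDegree_X_pow_sub_C] at hi
      rw [hlow i hi.ne, neg_mem_iff, Ideal.mem_span_singleton, coeff_C]
      split_ifs <;> simp
    · rw [hlow 0 hn.symm, neg_mem_iff, coeff_C_zero, Ideal.span_singleton_pow,
        Ideal.mem_span_singleton, sq]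
      exact fun h ↦ hϖ.not_isUnit (hϖ.irreducible.squarefree ϖ h)
  have hirr := hE.irreducible ((Ideal.span_singleton_prime hϖ.ne_zero).mpr hϖ)
    hm.isPrimitive (by rw [natDegree_X_pow_sub_C]; exact hn.bot_lt)
  simpa using (hm.irreducible_iff_irreducible_map_fraction_map (K := K)).mp hirr

end PureExtension

section CompleteDVR

lemma isSeparable_of_finrank_ne_zero {K E : Type*} [Field K] [Field E] [Algebra K E]
    (h : (Module.finrank K E : K) ≠ 0) : Algebra.IsSeparable K E := by
  have : FiniteDimensional K E := .of_finrank_pos (Nat.pos_of_ne_zero fun h0 ↦ h (by simp [h0]))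
  refine ((traceForm_nondegenerate_tfae K E).out 1 0).mp fun h0 ↦ h ?_
  simpa using (Algebra.trace_algebraMap (S := E) (1 : K)).symm.trans (by simp [h0])

lemma isDiscreteValuationRing_of_isIntegral (A B : Type*) [CommRing A] [IsDomain A]
    [IsDiscreteValuationRing A] [IsAdicComplete (maximalIdeal A) A] [IsAlgClosed (ResidueField A)]
    [CommRing B] [IsDedekindDomain B] [Algebra A B] [FaithfulSMul A B] [Algebra.IsIntegral A B] :
    IsDiscreteValuationRing B where
  __ := isLocalRing_of_isIntegral A B
  __ := (inferInstance : IsPrincipalIdealRing B)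
  not_a_field' := fun h ↦ IsDiscreteValuationRing.not_isField A
    (isField_of_isIntegral_of_isField (FaithfulSMul.algebraMap_injective A B)
      (isField_iff_maximalIdeal_eq.mpr h))

lemma exists_finrank_eq (A : Type*) {K Ω : Type*} [CommRing A] [IsDomain A]
    [IsDiscreteValuationRing A] [Field K] [Algebra A K] [IsFractionRing A K] [Field Ω]
    [IsAlgClosed Ω] [Algebra K Ω] {n : ℕ} (hn : n ≠ 0) :
    ∃ E : IntermediateField K Ω, Module.finrank K E = n := by
  obtain ⟨ϖ, hϖ⟩ := IsDiscreteValuationRing.exists_irreducible A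
  obtain ⟨δ, hδ⟩ := IsAlgClosed.exists_pow_nat_eq (algebraMap K Ω (algebraMap A K ϖ)) hn.bot_lt
  exact ⟨K⟮δ⟯, finrank_adjoin_of_irreducible
    (irreducible_X_pow_sub_C_of_prime K hϖ.prime hn) hδ⟩

variable {A K : Type*} [CommRing A] [IsDomain A] [IsDiscreteValuationRing A]
  [IsAdicComplete (maximalIdeal A) A] [IsAlgClosed (ResidueField A)] [Field K] [Algebra A K]
  [IsFractionRing A K]

lemma exists_pow_finrank_eq {E : Type*} [Field E] [Algebra K E]
    (hn : IsUnit (Module.finrank K E : A)) {ϖ : A} (hϖ : Irreducible ϖ) :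
    ∃ δ : E, δ ^ Module.finrank K E = algebraMap K E (algebraMap A K ϖ) := by
  have hnK : (Module.finrank K E : K) ≠ 0 := by simpa using (hn.map (algebraMap A K)).ne_zero
  have : FiniteDimensional K E := .of_finrank_pos (Nat.pos_of_ne_zero fun h0 ↦ hnK (by simp [h0]))
  have := isSeparable_of_finrank_ne_zero hnK
  let _ : Algebra A E := ((algebraMap K E).comp (algebraMap A K)).toAlgebra
  have : IsScalarTower A K E := .of_algebraMap_eq' rfl
  have : FaithfulSMul A E := .trans A K E
  let B := integralClosure A E
  have : IsDedekindDomain B := integralClosure.isDedekindDomain A K E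
  have : Module.Finite A B := IsIntegralClosure.finite A K E B
  have : Module.IsTorsionFree A B := inferInstance
  have : IsFractionRing B E := IsIntegralClosure.isFractionRing_of_finite_extension A K E B
  have : IsDiscreteValuationRing B := isDiscreteValuationRing_of_isIntegral A B
  have hrank : Module.finrank A B = Module.finrank K E :=
    (IsFractionRing.finrank_eq A K B E).symm
  obtain ⟨π, hπ⟩ := IsDiscreteValuationRing.exists_irreducible B
  obtain ⟨u, hu⟩ := associated_pow_finrank hϖ hπ
  obtain ⟨v, hv⟩ := exists_pow_eq_of_isUnit_of_isIntegral hn u.isUnit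
  refine ⟨π * v, ?_⟩
  rw [← IsScalarTower.algebraMap_apply, IsScalarTower.algebraMap_apply A B E, ← hu, ← hv, hrank,
    ← mul_pow]
  simp

lemma primitiveRoots_nonempty {n : ℕ} (hn : IsUnit (n : A)) : (primitiveRoots n K).Nonempty := by
  obtain ⟨ζ, hζ⟩ := exists_isPrimitiveRoot hn
  exact ⟨algebraMap A K ζ, (mem_primitiveRoots (ne_zero_of_isUnit_natCast hn).bot_lt).mpr
    (hζ.map_of_injective (IsFractionRing.injective A K))⟩

lemma isSplittingField_X_pow_finrank_sub_C {E : Type*} [Field E] [Algebra K E]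
    (hn : IsUnit (Module.finrank K E : A)) {ϖ : A} (hϖ : Irreducible ϖ) :
    (X ^ Module.finrank K E - C (algebraMap A K ϖ)).IsSplittingField K E := by
  have hn0 := ne_zero_of_isUnit_natCast hn
  have : FiniteDimensional K E := .of_finrank_pos hn0.bot_lt
  obtain ⟨δ, hδ⟩ := exists_pow_finrank_eq hn hϖ
  have hfinrank : Module.finrank K K⟮δ⟯ = Module.finrank K E :=
    finrank_adjoin_of_irreducible (irreducible_X_pow_sub_C_of_prime K hϖ.prime hn0) hδ
  exact isSplittingField_X_pow_sub_C_of_root_adjoin_eq_top (primitiveRoots_nonempty hn) hδ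
    (IntermediateField.eq_of_le_of_finrank_eq le_top
      (hfinrank.trans IntermediateField.finrank_top'.symm))

variable {Ω : Type*} [Field Ω] [Algebra K Ω] {n : ℕ}

lemma eq_of_finrank_eq (hn : IsUnit (n : A)) {E E' : IntermediateField K Ω}
    (hE : Module.finrank K E = n) (hE' : Module.finrank K E' = n) : E = E' := by
  obtain ⟨ϖ, hϖ⟩ := IsDiscreteValuationRing.exists_irreducible A
  have eq_adjoin {F : IntermediateField K Ω} (hF : Module.finrank K F = n) :
      F = IntermediateField.adjoin K ((X ^ n - C (algebraMap A K ϖ)).rootSet Ω) := by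
    subst hF
    exact (IntermediateField.isSplittingField_iff.mp
      (isSplittingField_X_pow_finrank_sub_C hn hϖ)).2
  exact (eq_adjoin hE).trans (eq_adjoin hE').symm

lemma exists_eq_zpow_mul_pow (hn : IsUnit (n : A)) {ϖ : A} (hϖ : Irreducible ϖ) {t : K}
    (ht : t ≠ 0) : ∃ (m : ℤ) (s : K), s ≠ 0 ∧ t = algebraMap A K ϖ ^ m * s ^ n := by
  obtain ⟨m, u, rfl⟩ := IsDiscreteValuationRing.exists_units_eq_smul_zpow_of_irreducible hϖ ht
  obtain ⟨v, hv⟩ := exists_pow_eq_of_isUnit hn u.isUnit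
  have hv0 : v ≠ 0 := by
    rintro rfl
    exact u.ne_zero (by rw [← hv, zero_pow (ne_zero_of_isUnit_natCast hn)])
  refine ⟨m, algebraMap A K v, by simpa using hv0, ?_⟩
  rw [← map_pow, hv, mul_comm, Units.smul_def, Algebra.smul_def]

lemma finrank_adjoin_of_forall_prime_pow_ne (hn : IsUnit (n : A)) {t : K} (ht : t ≠ 0)
    (hpow : ∀ q : ℕ, q.Prime → q ∣ n → ∀ s : K, s ^ q ≠ t) {β : Ω}
    (hβ : β ^ n = algebraMap K Ω t) : Module.finrank K K⟮β⟯ = n := by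
  have hn0 := ne_zero_of_isUnit_natCast hn
  refine (finrank_adjoin_le_of_pow_eq hn0 hβ).antisymm ?_
  have := IntermediateField.adjoin.finiteDimensional (isIntegral_of_pow_eq hn0 hβ)
  obtain ⟨ϖ, hϖ⟩ := IsDiscreteValuationRing.exists_irreducible A
  obtain ⟨m, s, hs, rfl⟩ := exists_eq_zpow_mul_pow hn hϖ ht
  obtain ⟨δ, hδβ, hδ⟩ := exists_mem_adjoin_pow_eq_of_isCoprime
    (isCoprime_of_forall_prime_pow_ne hpow) (by simpa using hϖ.ne_zero) hs hβ
  calc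
    n = Module.finrank K K⟮δ⟯ := (finrank_adjoin_of_irreducible
      (irreducible_X_pow_sub_C_of_prime K hϖ.prime hn0) hδ).symm
    _ ≤ Module.finrank K K⟮β⟯ := IntermediateField.finrank_le_of_le_right
      (IntermediateField.adjoin_simple_le_iff.mpr hδβ)

end CompleteDVR

section PowerSeries

variable (k : Type*) [Field k]

instance isAdicComplete_maximalIdeal_powerSeries :
    IsAdicComplete (maximalIdeal k⟦X⟧) k⟦X⟧ := by
  rw [PowerSeries.maximalIdeal_eq_span_X]
  infer_instance

instance isAlgClosed_residueField_powerSeries [IsAlgClosed k] : IsAlgClosed (ResidueField k⟦X⟧) :=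
  .of_ringEquiv k _ PowerSeries.residueFieldOfPowerSeries.symm

end PowerSeries

end FormalPuiseux

open FormalPuiseux in
theorem stmt5_general {A K Ω : Type*} [CommRing A] [IsDomain A] [IsDiscreteValuationRing A]
    [IsAdicComplete (maximalIdeal A) A] [IsAlgClosed (ResidueField A)] [Field K] [Algebra A K]
    [IsFractionRing A K] [Field Ω] [IsAlgClosed Ω] [Algebra K Ω] {n : ℕ} (hn : IsUnit (n : A)) :
    (∃! E : IntermediateField K Ω, Module.finrank K E = n) ∧
    ∀ E : IntermediateField K Ω, Module.finrank K E = n →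
      IsGalois K E ∧ IsCyclic (E ≃ₐ[K] E) ∧
      ∀ t : K, t ≠ 0 → (∀ q : ℕ, q.Prime → q ∣ n → ∀ s : K, s ^ q ≠ t) →
        ∀ β : Ω, β ^ n = algebraMap K Ω t → K⟮β⟯ = E := by
  obtain ⟨E₀, hE₀⟩ := exists_finrank_eq A (K := K) (Ω := Ω) (ne_zero_of_isUnit_natCast hn)
  refine ⟨⟨E₀, hE₀, fun E hE ↦ eq_of_finrank_eq hn hE hE₀⟩, fun E hE ↦ ?_⟩
  subst hE
  obtain ⟨ϖ, hϖ⟩ := IsDiscreteValuationRing.exists_irreducible A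
  have hn0 : NeZero (Module.finrank K E) := ⟨ne_zero_of_isUnit_natCast hn⟩
  have hroots := primitiveRoots_nonempty (K := K) hn
  have hirr := irreducible_X_pow_sub_C_of_prime K hϖ.prime hn0.out
  have := isSplittingField_X_pow_finrank_sub_C hn hϖ
  exact ⟨isGalois_of_isSplittingField_X_pow_sub_C hroots hirr E,
    isCyclic_of_isSplittingField_X_pow_sub_C hroots hirr E, fun t ht hpow β hβ ↦
      eq_of_finrank_eq hn
        (finrank_adjoin_of_forall_prime_pow_ne hn ht hpow hβ) rfl⟩

/-- Formal Puiseux theorem: for `K = k((z))`, `k` algebraically closed of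
characteristic `≠ p`, inside a fixed algebraic closure there is exactly one field extension
of `K` of degree `p`; it is Galois with cyclic Galois group, and it is generated by a `p`-th
root of any element of `K^*` which is not a `p`-th power. -/
theorem stmt5 (k : Type*) [Field k] [IsAlgClosed k] (p : ℕ) (hp : p.Prime)
    (hchar : (p : k) ≠ 0) :
    (∃! E : IntermediateField (LaurentSeries k) (AlgebraicClosure (LaurentSeries k)),
      Module.finrank (LaurentSeries k) ↥E = p) ∧
    ∀ E : IntermediateField (LaurentSeries k) (AlgebraicClosure (LaurentSeries k)),
      Module.finrank (LaurentSeries k) ↥E = p →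
      IsGalois (LaurentSeries k) ↥E ∧
      IsCyclic (↥E ≃ₐ[LaurentSeries k] ↥E) ∧
      ∀ t : LaurentSeries k, t ≠ 0 → (¬ ∃ s : LaurentSeries k, s ^ p = t) →
        ∀ β : AlgebraicClosure (LaurentSeries k),
          β ^ p = algebraMap (LaurentSeries k) (AlgebraicClosure (LaurentSeries k)) t →
          IntermediateField.adjoin (LaurentSeries k) {β} = E := by
  have hunit : IsUnit (p : k⟦X⟧) := by simpa using hchar.isUnit.map (PowerSeries.C (R := k))
  obtain ⟨hunique, hE⟩ :=
    stmt5_general (K := LaurentSeries k) (Ω := AlgebraicClosure (LaurentSeries k)) hunit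
  exact ⟨hunique, fun E hEp ↦ ⟨(hE E hEp).1, (hE E hEp).2.1, fun t ht hpow ↦
    (hE E hEp).2.2 t ht fun q hq hqp s hs ↦
      hpow ⟨s, (Nat.prime_dvd_prime_iff_eq hq hp).mp hqp ▸ hs⟩⟩⟩
end

section
/- Let $\mathbb{A}_X$ be the adele ring of a smooth projective curve over an algebraically closed field, $n$ prime to the characteristic, and $\t_1, \t_2$ two ideles (units of $\mathbb{A}_X$). Then $\mathbb{A}_X[T]/(T^n - \t_1)$ and $\mathbb{A}_X[T]/(T^n - \t_2)$ are isomorphic as $\mathbb{A}_X$-algebras if and only if for every closed point $x$, $\gcd(n, v_x(t_{1,x})) = \gcd(n, v_x(t_{2,x}))$. -/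
/-- The geometric adele ring of a family of Laurent series fields indexed by the closed
points: the subring of `∏ₓ k((z))` of families whose component lies in `k[[z]]` for all
but finitely many `x`. (Over an algebraically closed field every completed local field of
the curve is isomorphic to `k((z))`.) -/
noncomputable def adeleSubring (k : Type*) [Field k] (X : Type*) : Subring (X → LaurentSeries k) where
  carrier := {f | {x : X | f x ∉ (HahnSeries.ofPowerSeries ℤ k).range}.Finite}
  zero_mem' := by
    apply Set.Finite.subset Set.finite_empty
    intro x hx
    exact absurd (Subring.zero_mem _) hx
  one_mem' := by
    apply Set.Finite.subset Set.finite_empty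
    intro x hx
    exact absurd (Subring.one_mem _) hx
  add_mem' := by
    intro f g hf hg
    apply Set.Finite.subset (hf.union hg)
    intro x hx
    by_contra hc
    simp only [Set.mem_union, Set.mem_setOf_eq, not_or, not_not] at hc
    exact hx (Subring.add_mem _ hc.1 hc.2)
  mul_mem' := by
    intro f g hf hg
    apply Set.Finite.subset (hf.union hg)
    intro x hx
    by_contra hc
    simp only [Set.mem_union, Set.mem_setOf_eq, not_or, not_not] at hc
    exact hx (Subring.mul_mem _ hc.1 hc.2)
  neg_mem' := by
    intro f hf
    apply Set.Finite.subset hf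
    intro x hx
    by_contra hc
    simp only [Set.mem_setOf_eq, not_not] at hc
    exact hx (Subring.neg_mem _ hc)

/-- Evaluation of an adele at the closed point `x`, with values in the completed local
field `K_x = k((z))`. -/
noncomputable def adeleEval (k : Type*) [Field k] (X : Type*) (x : X) :
    adeleSubring k X →+* LaurentSeries k :=
  (Pi.evalRingHom (fun _ : X => LaurentSeries k) x).comp (Subring.subtype _)

/-!
An algebra homomorphism `𝔸[T]/(Tⁿ - t₁) → 𝔸[T]/(Tⁿ - t₂)` makes `ψ t₁` an `n`-th power in every
`𝔸`-algebra `ψ : 𝔸 → L` in which `ψ t₂` is one. A nonzero Laurent series is an `n`-th power iff `n`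
divides its order, so testing this on `𝔸 → K_x = k((z))` followed by `z ↦ z ^ m` shows that
`n ∣ m * v_x(t₂)` implies `n ∣ m * v_x(t₁)`. Letting `m` vary recovers `gcd(n, v_x)`.

Conversely, equal gcds mean that `v_x(t₂) ≡ r * v_x(t₁)` modulo `n` for a unit `r` of `ℤ/n`, so that
`t₂ = cⁿ t₁ʳ` at `x`. The exponent `r` varies with `x`, but it takes only finitely many values, so
idempotent adeles glue the elements `c τʳ` of `𝔸[τ] = 𝔸[T]/(Tⁿ - t₁)` to a root of `Tⁿ - t₂`. It
generates the algebra because `r` is invertible modulo `n`.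
-/

section Arithmetic

theorem exists_zmod_units_mul_eq_of_gcd_eq {n : ℕ} [NeZero n] {a b : ℤ}
    (hgcd : Int.gcd n a = Int.gcd n b) : ∃ u : (ZMod n)ˣ, (u : ZMod n) * a = b := by
  obtain ⟨m, hm⟩ : Int.gcd n a ∣ n := mod_cast Int.gcd_dvd_left (n : ℤ) a
  have hd : 0 < Int.gcd n a := Int.gcd_pos_of_ne_zero_left a (mod_cast NeZero.ne n)
  set d := Int.gcd n a
  obtain ⟨a', ha⟩ : (d : ℤ) ∣ a := Int.gcd_dvd_right ..
  obtain ⟨b', hb⟩ : (d : ℤ) ∣ b := hgcd ▸ Int.gcd_dvd_right ..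
  have isCoprime_of_gcd {c : ℤ} (hc : Int.gcd n (d * c) = d) : IsCoprime c m := by
    rw [hm, Nat.cast_mul, Int.gcd_mul_left, Int.natAbs_natCast] at hc
    exact (Int.isCoprime_iff_gcd_eq_one.2 (Nat.eq_of_mul_eq_mul_left hd (by simpa using hc))).symm
  have ha' : IsCoprime a' m := isCoprime_of_gcd (by rw [← ha])
  have hb' : IsCoprime b' m := isCoprime_of_gcd (by rw [← hb, ← hgcd])
  obtain ⟨u, hu⟩ := ZMod.unitsMap_surjective (Dvd.intro_left d hm.symm)
    (ZMod.unitOfIsCoprime b' hb' * (ZMod.unitOfIsCoprime a' ha')⁻¹)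
  have hmod : (m : ℤ) ∣ (u : ZMod n).val * a' - b' := by
    rw [← ZMod.intCast_zmod_eq_zero_iff_dvd, Int.cast_sub, sub_eq_zero]
    have hval := congrArg Units.val (eq_mul_inv_iff_mul_eq.1 hu)
    simpa [ZMod.unitsMap_val, ZMod.natCast_val] using hval
  have hmod' : (n : ℤ) ∣ (u : ZMod n).val * a - b := by
    have hmul : (d * m : ℤ) ∣ d * ((u : ZMod n).val * a' - b') := mul_dvd_mul_left _ hmod
    rwa [mul_sub, mul_left_comm, ← ha, ← hb, ← Nat.cast_mul, ← hm] at hmul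
  rw [← ZMod.intCast_zmod_eq_zero_iff_dvd] at hmod'
  exact ⟨u, by simpa [sub_eq_zero] using hmod'⟩

theorem gcd_dvd_gcd_of_forall_dvd_mul {n : ℕ} (hn : n ≠ 0) {a b : ℤ}
    (h : ∀ m : ℕ, m ≠ 0 → (n : ℤ) ∣ m * a → (n : ℤ) ∣ m * b) : Int.gcd n a ∣ Int.gcd n b := by
  obtain ⟨m, hm⟩ : Int.gcd n a ∣ n := mod_cast Int.gcd_dvd_left (n : ℤ) a
  have hm0 : m ≠ 0 := right_ne_zero_of_mul (hm ▸ hn)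
  have hn_eq : (n : ℤ) = m * Int.gcd n a := by rw [mul_comm]; exact_mod_cast hm
  have hma : (n : ℤ) ∣ m * a := hn_eq ▸ mul_dvd_mul_left _ (Int.gcd_dvd_right ..)
  have hmb : (m : ℤ) * Int.gcd n a ∣ m * b := hn_eq ▸ h m hm0 hma
  exact Int.dvd_gcd (Int.gcd_dvd_left ..) (Int.dvd_of_mul_dvd_mul_left (mod_cast hm0) hmb)

end Arithmetic

section HahnSeries

variable {Γ Γ' R : Type*} [AddCommMonoid Γ] [LinearOrder Γ] [IsOrderedCancelAddMonoid Γ]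
  [AddCommMonoid Γ'] [PartialOrder Γ'] [IsOrderedCancelAddMonoid Γ'] [NonAssocSemiring R]

theorem order_embDomainRingHom {φ : Γ →+ Γ'} (hinj : Function.Injective φ)
    (hφ : ∀ a b, φ a ≤ φ b ↔ a ≤ b) (f : HahnSeries Γ R) :
    (HahnSeries.embDomainRingHom φ hinj hφ f).order = φ f.order := by
  rcases eq_or_ne f 0 with rfl | hf
  · simp
  · have hne : HahnSeries.embDomainRingHom φ hinj hφ f ≠ 0 :=
      (map_ne_zero_iff _ HahnSeries.embDomain_injective).2 hf
    apply WithTop.coe_injective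
    rw [HahnSeries.order_eq_orderTop_of_ne_zero hne]
    exact HahnSeries.orderTop_embDomain.trans
      (by rw [← HahnSeries.order_eq_orderTop_of_ne_zero hf]; rfl)

end HahnSeries

section LaurentSeries

theorem mem_range_ofPowerSeries_iff {R : Type*} [Ring R] {f : LaurentSeries R} :
    f ∈ (HahnSeries.ofPowerSeries ℤ R).range ↔ 0 ≤ f.order := by
  constructor
  · rintro ⟨p, rfl⟩
    have horder : (HahnSeries.ofPowerSeries ℤ R p).order =
        (HahnSeries.toPowerSeries.symm p).order := order_embDomainRingHom _ _ _
    exact horder ▸ Int.natCast_nonneg _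
  · intro hf
    exact ⟨_, LaurentSeries.X_order_mul_powerSeriesPart (Int.toNat_of_nonneg hf)⟩

section Semiring

variable {R : Type*} [Semiring R]

/-- The totally ramified base change `z ↦ z ^ m` of `R((z))`, which makes a series whose order `v`
satisfies `n ∣ m * v` into one whose order is divisible by `n`. -/
noncomputable def ramification (R : Type*) [Semiring R] {m : ℕ} (hm : m ≠ 0) :
    LaurentSeries R →+* LaurentSeries R :=
  HahnSeries.embDomainRingHom (AddMonoidHom.mulLeft (m : ℤ)) (mul_right_injective₀ (mod_cast hm))
    fun _ _ => mul_le_mul_iff_right₀ (mod_cast hm.bot_lt)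

theorem order_ramification {m : ℕ} (hm : m ≠ 0) (f : LaurentSeries R) :
    (ramification R hm f).order = m * f.order :=
  order_embDomainRingHom ..

theorem constantCoeff_powerSeriesPart_ne_zero {f : LaurentSeries R} (hf : f ≠ 0) :
    PowerSeries.constantCoeff f.powerSeriesPart ≠ 0 := by
  rw [← PowerSeries.coeff_zero_eq_constantCoeff_apply, LaurentSeries.powerSeriesPart_coeff]
  simpa [HahnSeries.coeff_order_eq_zero] using hf

end Semiring

variable {k : Type*} [Field k]

theorem laurentSeries_order_inv (f : LaurentSeries k) : f⁻¹.order = -f.order := by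
  rcases eq_or_ne f 0 with rfl | hf
  · simp
  · rw [eq_neg_iff_add_eq_zero, ← HahnSeries.order_mul (inv_ne_zero hf) hf, inv_mul_cancel₀ hf,
      HahnSeries.order_one]

theorem exists_powerSeries_pow_eq {n : ℕ} (hchar : (n : k) ≠ 0) {p : PowerSeries k} {c : k}
    (hp : PowerSeries.constantCoeff p ≠ 0) (hc : c ^ n = PowerSeries.constantCoeff p) :
    ∃ q : PowerSeries k, q ^ n = p := by
  have hn : n ≠ 0 := by rintro rfl; simp at hchar
  have hc0 : c ≠ 0 := by rintro rfl; exact hp (by rw [← hc, zero_pow hn])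
  let P : Polynomial (PowerSeries k) := Polynomial.X ^ n - Polynomial.C p
  have hroot : P.eval (PowerSeries.C c) ∈ Ideal.span {(PowerSeries.X : PowerSeries k)} := by
    rw [Ideal.mem_span_singleton, PowerSeries.X_dvd_iff]
    simp [P, hc]
  have hsimple : IsUnit (P.derivative.eval (PowerSeries.C c)) := by
    rw [PowerSeries.isUnit_iff_constantCoeff]
    simp [P, hc0, hchar, Polynomial.derivative_X_pow]
  obtain ⟨q, hq, -⟩ := HenselianRing.is_henselian P (Polynomial.monic_X_pow_sub_C p hn) _ hroot
    (hsimple.map _)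
  exact ⟨q, by simpa [P, sub_eq_zero] using hq⟩

theorem exists_laurentSeries_pow_eq_iff {n : ℕ} (hroot : ∀ c : k, ∃ d, d ^ n = c)
    (hchar : (n : k) ≠ 0) {f : LaurentSeries k} (hf : f ≠ 0) :
    (∃ g : LaurentSeries k, g ^ n = f) ↔ (n : ℤ) ∣ f.order := by
  constructor
  · rintro ⟨g, rfl⟩
    simp
  · rintro ⟨m, hm⟩
    obtain ⟨c, hc⟩ := hroot (PowerSeries.constantCoeff f.powerSeriesPart)
    obtain ⟨q, hq⟩ := exists_powerSeries_pow_eq hchar (constantCoeff_powerSeriesPart_ne_zero hf) hc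
    use HahnSeries.single m 1 * HahnSeries.ofPowerSeries ℤ k q
    calc (HahnSeries.single m 1 * HahnSeries.ofPowerSeries ℤ k q) ^ n
        = HahnSeries.single f.order 1 * HahnSeries.ofPowerSeries ℤ k f.powerSeriesPart := by
          rw [mul_pow, HahnSeries.single_pow, one_pow, ← map_pow, hq, hm, nsmul_eq_mul]
      _ = f := f.single_order_mul_powerSeriesPart

theorem exists_pow_mul_pow_eq_of_gcd_order_eq {n : ℕ} [NeZero n]
    (hroot : ∀ c : k, ∃ d, d ^ n = c) (hchar : (n : k) ≠ 0) {f g : LaurentSeries k} (hf : f ≠ 0)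
    (hg : g ≠ 0) (hgcd : Int.gcd n f.order = Int.gcd n g.order) :
    ∃ (u : (ZMod n)ˣ) (w : LaurentSeries k), w ^ n * f ^ (u : ZMod n).val = g := by
  obtain ⟨u, hu⟩ := exists_zmod_units_mul_eq_of_gcd_eq hgcd
  have hfu : f ^ (u : ZMod n).val ≠ 0 := pow_ne_zero _ hf
  have horder : (g / f ^ (u : ZMod n).val).order = g.order - (u : ZMod n).val * f.order := by
    rw [div_eq_mul_inv, HahnSeries.order_mul hg (inv_ne_zero hfu), laurentSeries_order_inv,
      HahnSeries.order_pow, nsmul_eq_mul, sub_eq_add_neg]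
  have hdvd : (n : ℤ) ∣ (g / f ^ (u : ZMod n).val).order := by
    rw [horder, ← ZMod.intCast_zmod_eq_zero_iff_dvd]
    simp [hu]
  obtain ⟨w, hw⟩ := (exists_laurentSeries_pow_eq_iff hroot hchar (div_ne_zero hg hfu)).2 hdvd
  exact ⟨u, w, by rw [hw, div_mul_cancel₀ g hfu]⟩

end LaurentSeries

section Idempotents

theorem mul_pow_eq_mul_pow_of_mul_eq_mul {M : Type*} [CommMonoid M] {e a b : M}
    (h : e * a = e * b) (m : ℕ) : e * a ^ m = e * b ^ m := by
  induction m with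
  | zero => simp only [pow_zero]
  | succ m ih =>
    calc e * a ^ (m + 1) = e * a ^ m * a := by rw [pow_succ, mul_assoc]
      _ = e * a * b ^ m := by rw [ih, mul_right_comm]
      _ = e * b ^ (m + 1) := by rw [h, pow_succ', mul_assoc]

variable {ι B : Type*} [Fintype ι] [Semiring B] {e : ι → B}

theorem mul_sum_mul_of_orthogonalIdempotents (he : OrthogonalIdempotents e) (y : ι → B) (i : ι) :
    e i * ∑ j, e j * y j = e i * y i := by
  classical
  simp [Finset.mul_sum, ← mul_assoc, he.mul_eq]

theorem sum_mul_of_completeOrthogonalIdempotents (he : CompleteOrthogonalIdempotents e) (y : B) :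
    ∑ i, e i * y = y := by
  rw [← Finset.sum_mul, he.complete, one_mul]

end Idempotents

section RadicalAlgebra

open Polynomial

variable {A : Type*} [CommRing A]

theorem adjoinRoot_root_X_pow_sub_C_pow (n : ℕ) (t : A) :
    AdjoinRoot.root (X ^ n - C t) ^ n = algebraMap A (AdjoinRoot (X ^ n - C t)) t := by
  have hroot := AdjoinRoot.eval₂_root (X ^ n - C t)
  rwa [eval₂_sub, eval₂_X_pow, eval₂_C, sub_eq_zero] at hroot

theorem exists_pow_eq_of_adjoinRoot_algHom {L : Type*} [CommRing L] {n : ℕ} {t₁ t₂ : A}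
    (F : AdjoinRoot (X ^ n - C t₁) →ₐ[A] AdjoinRoot (X ^ n - C t₂)) (ψ : A →+* L)
    (hψ : ∃ y, y ^ n = ψ t₂) : ∃ y, y ^ n = ψ t₁ := by
  obtain ⟨y, hy⟩ := hψ
  let G : AdjoinRoot (X ^ n - C t₂) →+* L := AdjoinRoot.lift ψ y (by simp [hy])
  use G (F (AdjoinRoot.root _))
  rw [← map_pow, ← map_pow, adjoinRoot_root_X_pow_sub_C_pow, AlgHom.commutes]
  exact AdjoinRoot.lift_of _

theorem nonempty_adjoinRoot_algEquiv_of_adjoin_eq_top {f g : A[X]} (hf : f.Monic) (hg : g.Monic)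
    (hdeg : f.natDegree = g.natDegree) {σ : AdjoinRoot f} (hroot : aeval σ g = 0)
    (hgen : Algebra.adjoin A {σ} = ⊤) : Nonempty (AdjoinRoot f ≃ₐ[A] AdjoinRoot g) := by
  let F : AdjoinRoot g →ₐ[A] AdjoinRoot f := AdjoinRoot.liftAlgHom g (Algebra.ofId A _) σ hroot
  have hsurj : Function.Surjective F := by
    rw [← AlgHom.range_eq_top, eq_top_iff, ← hgen, Algebra.adjoin_le_iff, Set.singleton_subset_iff]
    exact ⟨AdjoinRoot.root g, AdjoinRoot.liftAlgHom_root ..⟩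
  let E : AdjoinRoot g ≃ₗ[A] AdjoinRoot f :=
    (AdjoinRoot.powerBasis' hg).basis.equiv (AdjoinRoot.powerBasis' hf).basis (finCongr hdeg.symm)
  have : Module.Finite A (AdjoinRoot f) := .of_basis (AdjoinRoot.powerBasis' hf).basis
  have hinj : Function.Injective F :=
    OrzechProperty.injective_of_surjective_of_injective E.toLinearMap F.toLinearMap E.injective
      hsurj
  exact ⟨(AlgEquiv.ofBijective F ⟨hinj, hsurj⟩).symm⟩

theorem mul_pow_mem_of_modEq {B : Type*} [CommRing B] [Algebra A B] {S : Subalgebra A B}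
    {n a b : ℕ} {y z : B} {t : Aˣ} (hy : y ^ n = algebraMap A B t) (hab : a ≡ b [MOD n])
    (ha : z * y ^ a ∈ S) : z * y ^ b ∈ S := by
  have pow_eq (m : ℕ) : y ^ m = y ^ (m % n) * algebraMap A B (t ^ (m / n) : Aˣ) := by
    conv_lhs => rw [← Nat.mod_add_div m n, pow_add, pow_mul, hy, ← map_pow]
    rw [Units.val_pow_eq_pow_val]
  have hmod : y ^ (a % n) = y ^ a * algebraMap A B ((t ^ (a / n))⁻¹ : Aˣ) := by
    rw [pow_eq a, mul_assoc, ← map_mul, Units.mul_inv, map_one, mul_one]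
  rw [pow_eq b, ← hab, hmod, ← mul_assoc, ← mul_assoc]
  exact mul_mem (mul_mem ha (S.algebraMap_mem _)) (S.algebraMap_mem _)

theorem mul_mem_of_mul_unit_mul_pow_mem {B : Type*} [CommRing B] [Algebra A B]
    {S : Subalgebra A B} {n r : ℕ} (hn : n ≠ 0) (hr : r.Coprime n) {y z σ : B} {t c : Aˣ}
    (hy : y ^ n = algebraMap A B t) (hσ : z * σ = z * (algebraMap A B c * y ^ r))
    (hz : z ∈ S) (hσS : σ ∈ S) : z * y ∈ S := by
  obtain ⟨s, -, hs⟩ := Nat.exists_mul_mod_eq_of_coprime 1 hr hn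
  have hpow : z * y ^ (r * s) = z * σ ^ s * algebraMap A B ((c ^ s)⁻¹ : Aˣ) := by
    have hcancel : algebraMap A B c ^ s * algebraMap A B ((c ^ s)⁻¹ : Aˣ) = 1 := by
      rw [← map_pow, ← map_mul, ← Units.val_pow_eq_pow_val, Units.mul_inv, map_one]
    rw [mul_pow_eq_mul_pow_of_mul_eq_mul hσ, mul_pow, ← pow_mul]
    linear_combination -(z * y ^ (r * s)) * hcancel
  have hmem : z * y ^ (r * s) ∈ S :=
    hpow ▸ mul_mem (mul_mem hz (pow_mem hσS s)) (S.algebraMap_mem _)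
  simpa only [pow_one] using mul_pow_mem_of_modEq hy hs hmem

theorem nonempty_adjoinRoot_algEquiv_of_completeOrthogonalIdempotents {ι : Type*} [Fintype ι]
    {e : ι → A} (he : CompleteOrthogonalIdempotents e) {n : ℕ} (hn : n ≠ 0) {r : ι → ℕ}
    (hr : ∀ i, (r i).Coprime n) {t₁ t₂ c : Aˣ}
    (hc : ∀ i, e i * (c ^ n * t₁ ^ r i) = e i * t₂) :
    Nonempty (AdjoinRoot (X ^ n - C (t₁ : A)) ≃ₐ[A] AdjoinRoot (X ^ n - C (t₂ : A))) := by
  let B := AdjoinRoot (X ^ n - C (t₁ : A))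
  let τ : B := AdjoinRoot.root _
  have hτ : τ ^ n = algebraMap A B t₁ := adjoinRoot_root_X_pow_sub_C_pow n _
  let ε (i : ι) : B := algebraMap A B (e i)
  have hε : CompleteOrthogonalIdempotents ε := he.map (algebraMap A B)
  let σ : B := ∑ i, ε i * (algebraMap A B c * τ ^ r i)
  have hσ (i : ι) : ε i * σ = ε i * (algebraMap A B c * τ ^ r i) :=
    mul_sum_mul_of_orthogonalIdempotents hε.toOrthogonalIdempotents _ i
  have hσn_component (i : ι) : ε i * σ ^ n = ε i * algebraMap A B t₂ := by
    rw [mul_pow_eq_mul_pow_of_mul_eq_mul (hσ i), mul_pow, pow_right_comm, hτ]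
    simp only [ε, ← map_pow, ← map_mul, hc]
  have hσn : σ ^ n = algebraMap A B t₂ := by
    rw [← sum_mul_of_completeOrthogonalIdempotents hε (σ ^ n), Finset.sum_congr rfl
      fun i _ => hσn_component i, sum_mul_of_completeOrthogonalIdempotents hε]
  have hτ_mem : τ ∈ Algebra.adjoin A {σ} := by
    rw [← sum_mul_of_completeOrthogonalIdempotents hε τ]
    exact sum_mem fun i _ => mul_mem_of_mul_unit_mul_pow_mem hn (hr i) hτ (hσ i)
      (Subalgebra.algebraMap_mem _ _) (Algebra.self_mem_adjoin_singleton A σ)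
  have hgen : Algebra.adjoin A {σ} = ⊤ := by
    rw [eq_top_iff, ← AdjoinRoot.adjoinRoot_eq_top, Algebra.adjoin_le_iff]
    exact Set.singleton_subset_iff.2 hτ_mem
  have hdeg : (X ^ n - C (t₁ : A)).natDegree = (X ^ n - C (t₂ : A)).natDegree := by
    nontriviality A
    simp only [natDegree_X_pow_sub_C]
  exact nonempty_adjoinRoot_algEquiv_of_adjoin_eq_top (monic_X_pow_sub_C _ hn)
    (monic_X_pow_sub_C _ hn) hdeg (by simp [B, hσn]) hgen

end RadicalAlgebra

section Adeles

variable {k : Type*} [Field k] {X : Type*}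

theorem mem_adeleSubring_iff {w : X → LaurentSeries k} :
    w ∈ adeleSubring k X ↔ {x | (w x).order < 0}.Finite := by
  change {x | w x ∉ (HahnSeries.ofPowerSeries ℤ k).range}.Finite ↔ _
  simp only [mem_range_ofPowerSeries_iff, not_le]

theorem adele_ext {a b : adeleSubring k X} (h : ∀ x, adeleEval k X x a = adeleEval k X x b) :
    a = b :=
  Subtype.ext (funext h)

theorem adeleEval_idele_ne_zero (t : (adeleSubring k X)ˣ) (x : X) : adeleEval k X x t ≠ 0 :=
  (t.isUnit.map (adeleEval k X x)).ne_zero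

theorem finite_order_idele_ne_zero (t : (adeleSubring k X)ˣ) :
    {x | (adeleEval k X x t).order ≠ 0}.Finite := by
  have hpole (a : adeleSubring k X) : {x | (adeleEval k X x a).order < 0}.Finite :=
    mem_adeleSubring_iff.1 a.2
  refine ((hpole t).union (hpole (t⁻¹ : (adeleSubring k X)ˣ))).subset fun x hx => ?_
  rcases lt_or_gt_of_ne hx with hneg | hpos
  · exact .inl hneg
  · exact .inr (by simpa [laurentSeries_order_inv] using hpos)

theorem exists_idele_of_finite_order_ne_zero {w : X → LaurentSeries k} (hw : ∀ x, w x ≠ 0)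
    (hfin : {x | (w x).order ≠ 0}.Finite) :
    ∃ t : (adeleSubring k X)ˣ, ∀ x, adeleEval k X x t = w x := by
  have hmem : w ∈ adeleSubring k X := mem_adeleSubring_iff.2 (hfin.subset fun _ hx => ne_of_lt hx)
  have hmem_inv : w⁻¹ ∈ adeleSubring k X := by
    refine mem_adeleSubring_iff.2 (hfin.subset fun x hx => ?_)
    have hpos : 0 < (w x).order := by simpa [laurentSeries_order_inv] using hx
    exact hpos.ne'
  exact ⟨⟨⟨w, hmem⟩, ⟨w⁻¹, hmem_inv⟩, adele_ext fun x => mul_inv_cancel₀ (hw x),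
    adele_ext fun x => inv_mul_cancel₀ (hw x)⟩, fun _ => rfl⟩

/-- The idempotent adele equal to `1` at the points of `s` and to `0` elsewhere, for gluing
data given on the parts of a finite partition of `X`. -/
noncomputable def adeleIndicator (k : Type*) [Field k] {X : Type*} (s : Set X) :
    adeleSubring k X :=
  ⟨s.indicator 1, mem_adeleSubring_iff.2 <| Set.finite_empty.subset fun x hx => by
    by_cases hxs : x ∈ s <;> simp [hxs] at hx⟩

theorem adeleEval_adeleIndicator_of_mem {s : Set X} {x : X} (hx : x ∈ s) :
    adeleEval k X x (adeleIndicator k s) = 1 :=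
  Set.indicator_of_mem hx 1

theorem adeleEval_adeleIndicator_of_notMem {s : Set X} {x : X} (hx : x ∉ s) :
    adeleEval k X x (adeleIndicator k s) = 0 :=
  Set.indicator_of_notMem hx 1

theorem completeOrthogonalIdempotents_adeleIndicator_fiber {ι : Type*} [Fintype ι] (u : X → ι) :
    CompleteOrthogonalIdempotents fun i => adeleIndicator k (u ⁻¹' {i}) := by
  refine CompleteOrthogonalIdempotents.iff_ortho_complete.2 ⟨fun i j hij => ?_, ?_⟩
  · refine adele_ext fun x => ?_
    rw [map_mul, map_zero]
    by_cases hxi : u x = i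
    · rw [adeleEval_adeleIndicator_of_notMem (s := u ⁻¹' {j}) (by simp [hxi, hij]), mul_zero]
    · rw [adeleEval_adeleIndicator_of_notMem (s := u ⁻¹' {i}) hxi, zero_mul]
  · refine adele_ext fun x => ?_
    rw [map_sum, map_one, Fintype.sum_eq_single (u x)]
    · exact adeleEval_adeleIndicator_of_mem rfl
    · exact fun i hi => adeleEval_adeleIndicator_of_notMem hi.symm

end Adeles

section RadicalAdeleAlgebra

open Polynomial

variable {k : Type*} [Field k] {X : Type*} {n : ℕ} {t₁ t₂ : (adeleSubring k X)ˣ}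

theorem gcd_order_dvd_of_adjoinRoot_algHom (hroot : ∀ c : k, ∃ d, d ^ n = c)
    (hchar : (n : k) ≠ 0)
    (F : AdjoinRoot (Polynomial.X ^ n - C (t₁ : adeleSubring k X)) →ₐ[adeleSubring k X]
      AdjoinRoot (Polynomial.X ^ n - C (t₂ : adeleSubring k X))) (x : X) :
    Int.gcd n (adeleEval k X x t₂).order ∣ Int.gcd n (adeleEval k X x t₁).order := by
  have hn : n ≠ 0 := by rintro rfl; simp at hchar
  refine gcd_dvd_gcd_of_forall_dvd_mul hn fun m hm hdvd => ?_
  let ψ : adeleSubring k X →+* LaurentSeries k := (ramification k hm).comp (adeleEval k X x)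
  have dvd_iff (t : (adeleSubring k X)ˣ) :
      (n : ℤ) ∣ m * (adeleEval k X x t).order ↔ ∃ y, y ^ n = ψ t := by
    rw [exists_laurentSeries_pow_eq_iff hroot hchar (t.isUnit.map ψ).ne_zero, RingHom.comp_apply,
      order_ramification]
  exact (dvd_iff t₁).2 (exists_pow_eq_of_adjoinRoot_algHom F ψ ((dvd_iff t₂).1 hdvd))

theorem exists_idele_pow_mul_pow_eq_of_gcd_order_eq [NeZero n]
    (hroot : ∀ c : k, ∃ d, d ^ n = c) (hchar : (n : k) ≠ 0)
    (hgcd : ∀ x, Int.gcd n (adeleEval k X x t₁).order = Int.gcd n (adeleEval k X x t₂).order) :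
    ∃ (u : X → (ZMod n)ˣ) (c : (adeleSubring k X)ˣ), ∀ x,
      adeleEval k X x c ^ n * adeleEval k X x t₁ ^ (u x : ZMod n).val = adeleEval k X x t₂ := by
  choose u w hw using fun x => exists_pow_mul_pow_eq_of_gcd_order_eq hroot hchar
    (adeleEval_idele_ne_zero t₁ x) (adeleEval_idele_ne_zero t₂ x) (hgcd x)
  have hw0 (x : X) : w x ≠ 0 := by
    intro hwx
    apply adeleEval_idele_ne_zero t₂ x
    rw [← hw x, hwx, zero_pow (NeZero.ne n), zero_mul]
  have horder (x : X) : n * (w x).order + (u x : ZMod n).val * (adeleEval k X x t₁).order =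
      (adeleEval k X x t₂).order := by
    rw [← hw x, HahnSeries.order_mul (pow_ne_zero _ (hw0 x))
      (pow_ne_zero _ (adeleEval_idele_ne_zero t₁ x))]
    simp only [HahnSeries.order_pow, nsmul_eq_mul]
  have hfin : {x | (w x).order ≠ 0}.Finite := by
    refine ((finite_order_idele_ne_zero t₁).union (finite_order_idele_ne_zero t₂)).subset
      fun x hx => ?_
    by_contra! hcon
    simp only [Set.mem_union, Set.mem_ofPred_eq, not_or, not_not] at hcon
    exact hx (by simpa [hcon, NeZero.ne n] using horder x)
  obtain ⟨c, hc⟩ := exists_idele_of_finite_order_ne_zero hw0 hfin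
  exact ⟨u, c, fun x => by rw [hc, hw]⟩

theorem nonempty_adjoinRoot_algEquiv_of_gcd_order_eq (hroot : ∀ c : k, ∃ d, d ^ n = c)
    (hchar : (n : k) ≠ 0)
    (hgcd : ∀ x, Int.gcd n (adeleEval k X x t₁).order = Int.gcd n (adeleEval k X x t₂).order) :
    Nonempty (AdjoinRoot (Polynomial.X ^ n - C (t₁ : adeleSubring k X)) ≃ₐ[adeleSubring k X]
      AdjoinRoot (Polynomial.X ^ n - C (t₂ : adeleSubring k X))) := by
  have : NeZero n := ⟨by rintro rfl; simp at hchar⟩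
  obtain ⟨u, c, hc⟩ := exists_idele_pow_mul_pow_eq_of_gcd_order_eq hroot hchar hgcd
  refine nonempty_adjoinRoot_algEquiv_of_completeOrthogonalIdempotents
    (completeOrthogonalIdempotents_adeleIndicator_fiber u) (NeZero.ne n)
    (fun i => ZMod.val_coe_unit_coprime i) (c := c) fun i => adele_ext fun x => ?_
  simp only [map_mul, map_pow]
  by_cases hx : u x = i
  · rw [← hx, hc]
  · rw [adeleEval_adeleIndicator_of_notMem (s := u ⁻¹' {i}) hx, zero_mul, zero_mul]

end RadicalAdeleAlgebra

theorem stmt13_general (k : Type*) [Field k] (X : Type*) (n : ℕ)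
    (hroot : ∀ c : k, ∃ d, d ^ n = c) (hchar : (n : k) ≠ 0) (t₁ t₂ : (adeleSubring k X)ˣ) :
    Nonempty
      (AdjoinRoot (Polynomial.X ^ n - Polynomial.C ((t₁ : adeleSubring k X)))
        ≃ₐ[adeleSubring k X]
       AdjoinRoot (Polynomial.X ^ n - Polynomial.C ((t₂ : adeleSubring k X)))) ↔
    ∀ x : X,
      Int.gcd n (HahnSeries.order (((t₁ : adeleSubring k X) : X → LaurentSeries k) x)) =
      Int.gcd n (HahnSeries.order (((t₂ : adeleSubring k X) : X → LaurentSeries k) x)) := by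
  constructor
  · rintro ⟨E⟩ x
    exact Nat.dvd_antisymm (gcd_order_dvd_of_adjoinRoot_algHom hroot hchar E.symm.toAlgHom x)
      (gcd_order_dvd_of_adjoinRoot_algHom hroot hchar E.toAlgHom x)
  · exact nonempty_adjoinRoot_algEquiv_of_gcd_order_eq hroot hchar

/-- for ideles `𝔱₁, 𝔱₂` (units of the adele ring `𝔸_X`) and `n` prime to
the characteristic, `𝔸_X[T]/(Tⁿ - 𝔱₁) ≅ 𝔸_X[T]/(Tⁿ - 𝔱₂)` as `𝔸_X`-algebras iff
`gcd(n, vₓ(t₁ₓ)) = gcd(n, vₓ(t₂ₓ))` at every closed point `x`. -/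
theorem stmt13 (k : Type*) [Field k] [IsAlgClosed k] (X : Type*) (n : ℕ) (hn : 0 < n)
    (hchar : (n : k) ≠ 0) (t₁ t₂ : (adeleSubring k X)ˣ) :
    Nonempty
      (AdjoinRoot (Polynomial.X ^ n - Polynomial.C ((t₁ : adeleSubring k X)))
        ≃ₐ[adeleSubring k X]
       AdjoinRoot (Polynomial.X ^ n - Polynomial.C ((t₂ : adeleSubring k X)))) ↔
    ∀ x : X,
      Int.gcd n (HahnSeries.order (((t₁ : adeleSubring k X) : X → LaurentSeries k) x)) =
      Int.gcd n (HahnSeries.order (((t₂ : adeleSubring k X) : X → LaurentSeries k) x)) :=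
  stmt13_general k X n (fun c => IsAlgClosed.exists_pow_nat_eq c hn) hchar t₁ t₂
end
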